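/- Let q be a complex number with 0 < |q| < 1, fix a square root q^{1/2} of q, and let a be a complex number with |a| < 1. Then ∫₀^π h(cos θ; q^{1/2}, -q^{1/2}) / h(cos θ; a) dθ = π (q^{1/2}; q)_∞ (-q^{1/2}; q)_∞ / ((q; q)_∞ (a; q)_∞ (-a; q)_∞). -/

import Mathlib

open Complex MeasureTheory

/-- The q-shifted factorial `(x; q)_∞ = ∏_{k=0}^∞ (1 - x q^k)`. -/
noncomputable def qp (q x : ℂ) : ℂ := ∏' k : ℕ, (1 - x * q ^ k)

/-- The finite q-shifted factorial `(x; q)_n = ∏_{k=0}^{n-1} (1 - x q^k)`. -/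
noncomputable def qpn (q x : ℂ) (n : ℕ) : ℂ := ∏ k ∈ Finset.range n, (1 - x * q ^ k)

/-- For `x = cos θ`, `h(x; λ) = (λ e^{iθ}; q)_∞ (λ e^{-iθ}; q)_∞`. -/
noncomputable def hh (q : ℂ) (θ : ℝ) (l : ℂ) : ℂ :=
  qp q (l * Complex.exp ((θ : ℂ) * Complex.I)) *
    qp q (l * Complex.exp (-((θ : ℂ) * Complex.I)))

theorem qp_sum (q x : ℂ) (hq : ‖q‖ < 1) : Summable fun k : ℕ => ‖-(x * q ^ k)‖ := by
  simp only [norm_neg, norm_mul, norm_pow]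
  exact (summable_geometric_of_lt_one (norm_nonneg _) hq).mul_left _

theorem qp_mult (q x : ℂ) (hq : ‖q‖ < 1) : Multipliable fun k : ℕ => (1 - x * q ^ k) := by
  simpa [sub_eq_add_neg] using multipliable_one_add_of_summable (qp_sum q x hq)

theorem qp_rec (q x : ℂ) (hq : ‖q‖ < 1) : qp q x = (1 - x) * qp q (q * x) := by
  unfold qp
  have hm : Multipliable fun k : ℕ => (1 - x * q ^ (k + 1)) := by
    refine (qp_mult q (q * x) hq).congr fun k => ?_
    ring
  rw [tprod_eq_zero_mul' (f := fun k : ℕ => (1 - x * q ^ k)) hm]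
  simp only [pow_zero, mul_one]
  congr 1
  refine tprod_congr fun k => ?_
  ring

theorem qp_ne (q x : ℂ) (hq : ‖q‖ < 1) (hx : ‖x‖ < 1) : qp q x ≠ 0 := by
  unfold qp
  have := tprod_one_add_ne_zero_of_summable (f := fun k : ℕ => -(x * q ^ k)) ?_ (qp_sum q x hq)
  · simpa [sub_eq_add_neg] using this
  · intro i h
    have h1 : x * q ^ i = 1 := by linear_combination -h
    have h2 : ‖x * q ^ i‖ < 1 := by
      rw [norm_mul, norm_pow]
      calc ‖x‖ * ‖q‖ ^ i ≤ ‖x‖ * 1 := by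
            gcongr
            exact pow_le_one₀ (norm_nonneg _) hq.le
        _ < 1 := by simpa using hx
    rw [h1] at h2
    simp at h2

theorem qp_zero (q : ℂ) : qp q 0 = 1 := by simp [qp]

theorem qp_diff (q : ℂ) (hq : ‖q‖ < 1) : Differentiable ℂ (qp q) := by
  intro x
  have hM : x ∈ Metric.ball (0:ℂ) (‖x‖ + 1) := by simp
  have h := Summable.hasProdLocallyUniformlyOn_nat_one_add (R := ℂ)
    (K := Metric.ball (0:ℂ) (‖x‖ + 1)) (f := fun k z => -(z * q ^ k)) Metric.isOpen_ball
    (u := fun k => (‖x‖ + 1) * ‖q‖ ^ k)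
    ((summable_geometric_of_lt_one (norm_nonneg _) hq).mul_left _)
    (.of_forall fun n z hz => by
      simp only [norm_neg, norm_mul, norm_pow]
      gcongr
      simpa using (mem_ball_zero_iff.1 hz).le) (fun n => by fun_prop)
  have h2 : DifferentiableOn ℂ (fun z => ∏' k : ℕ, (1 + -(z * q ^ k)))
      (Metric.ball (0:ℂ) (‖x‖ + 1)) := by
    refine h.differentiableOn (.of_forall fun s ↦ ?_) Metric.isOpen_ball
    simpa [Finset.prod_fn] using
      DifferentiableOn.finsetProd (𝕜 := ℂ) (u := s) (f := fun k (z : ℂ) => 1 + -(z * q ^ k))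
        (s := Metric.ball (0:ℂ) (‖x‖ + 1)) (fun _ _ ↦ by fun_prop)
  have h3 := h2.differentiableAt (Metric.isOpen_ball.mem_nhds hM)
  have h4 : qp q = fun z => ∏' k : ℕ, (1 + -(z * q ^ k)) := by
    funext z
    simp only [qp, sub_eq_add_neg]
  rw [h4]
  exact h3

theorem qp_euler (q u : ℂ) (hq : ‖q‖ < 1) (hu : u ^ 2 = q) :
    qp q u * qp q (-u) * qp q (-q) = 1 := by
  have hq2 : ‖q ^ 2‖ < 1 := by
    rw [norm_pow]; exact pow_lt_one₀ (norm_nonneg _) hq two_ne_zero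
  have key : ∀ x : ℂ, qp q x * qp q (-x) = qp (q ^ 2) (x ^ 2) := by
    intro x
    unfold qp
    rw [← (qp_mult q x hq).tprod_mul (qp_mult q (-x) hq)]
    refine tprod_congr fun k => ?_
    ring
  have h1 : qp (q ^ 2) q * qp (q ^ 2) (q ^ 2) = qp q q := by
    unfold qp
    have e1 : ∀ k : ℕ, 1 - q * (q ^ 2) ^ k = 1 - q * q ^ (2 * k) := by
      intro k; rw [pow_mul]
    have e2 : ∀ k : ℕ, 1 - q ^ 2 * (q ^ 2) ^ k = 1 - q * q ^ (2 * k + 1) := by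
      intro k; rw [pow_succ q (2 * k), pow_mul]; ring
    have m1 := (qp_mult (q ^ 2) q hq2).congr e1
    have m2 := (qp_mult (q ^ 2) (q ^ 2) hq2).congr e2
    rw [tprod_congr e1, tprod_congr e2]
    exact tprod_even_mul_odd (f := fun n : ℕ => 1 - q * q ^ n) m1 m2
  rw [key u, hu]
  rw [← key q] at h1
  have := qp_ne q q hq hq
  apply mul_right_cancel₀ this
  linear_combination h1

open Real in
theorem avg_refl (f : ℂ → ℂ) (c : ℂ) (R : ℝ) (hR : R ≠ 0) :
    circleAverage (fun z => f (c / z)) 0 R = circleAverage f 0 (‖c‖ / R) := by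
  rw [circleAverage_eq_integral_add (f := f) c.arg, circleAverage_def]
  congr 1
  have hper : Function.Periodic (fun θ : ℝ => f (circleMap 0 (‖c‖ / R) (θ + c.arg))) (2 * π) := by
    intro x
    show f _ = f _
    rw [show x + 2 * π + c.arg = (x + c.arg) + 2 * π by ring, periodic_circleMap 0 _ (x + c.arg)]
  have h := hper.intervalIntegral_add_eq 0 (-(2*π))
  rw [zero_add, neg_add_cancel] at h
  rw [h]
  have h2 := intervalIntegral.integral_comp_neg
    (fun θ : ℝ => f (circleMap 0 (‖c‖ / R) (θ + c.arg))) (a := 0) (b := 2 * π)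
  rw [neg_zero] at h2
  rw [← h2]
  refine intervalIntegral.integral_congr fun θ _ => ?_
  show f _ = f _
  congr 1
  simp only [circleMap, zero_add]
  push_cast
  rw [add_mul, Complex.exp_add]
  nth_rewrite 1 [← Complex.norm_mul_exp_arg_mul_I c]
  rw [neg_mul, Complex.exp_neg]
  have : (R : ℂ) ≠ 0 := by exact_mod_cast hR
  have := Complex.exp_ne_zero (θ * I)
  field_simp

open Real in
theorem avg_annulus (f : ℂ → ℂ) (r R : ℝ) (hr : 0 < r) (hrR : r ≤ R)
    (hf : ∀ z : ℂ, r ≤ ‖z‖ → ‖z‖ ≤ R → DifferentiableAt ℂ f z) :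
    circleAverage f 0 R = circleAverage f 0 r := by
  rw [circleAverage_eq_circleIntegral hr.ne', circleAverage_eq_circleIntegral (hr.trans_le hrR).ne']
  congr 1
  refine Complex.circleIntegral_sub_center_inv_smul_eq_of_differentiable_on_annulus_off_countable
    hr hrR (s := ∅) Set.countable_empty ?_ ?_
  · intro z hz
    simp at hz
    exact (hf z hz.2 hz.1).continuousAt.continuousWithinAt
  · intro z hz
    simp at hz
    exact hf z hz.2.le hz.1.le

open Real in
theorem avg_antisymm (f : ℂ → ℂ) (q : ℂ) (hq0 : 0 < ‖q‖) 
    (hf : ∀ z : ℂ, z ≠ 0 → f (q / z) = - f z) :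
    circleAverage f 0 (√‖q‖) = 0 := by
  have hs : 0 < √‖q‖ := Real.sqrt_pos.2 hq0
  have h := avg_refl f q (√‖q‖) hs.ne'
  rw [Real.div_sqrt] at h
  have h2 : circleAverage (fun z => f (q / z)) 0 (√‖q‖)
      = circleAverage (fun z => (-1 : ℂ) • f z) 0 (√‖q‖) := by
    apply circleAverage_congr_sphere
    intro z hz
    have : z ≠ 0 := by
      rintro rfl
      simp at hz
      rw [abs_of_pos hs] at hz
      exact hs.ne hz
    simp [hf z this]
  rw [h2, circleAverage_fun_smul] at h
  simp only [smul_eq_mul] at h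
  linear_combination (-1/2) * h

theorem ci_of_diff (f : ℂ → ℂ) (R : ℝ) (hR : 0 < R)
    (hf : ∀ z : ℂ, ‖z‖ = R → DifferentiableAt ℂ f z) : CircleIntegrable f 0 R := by
  apply ContinuousOn.circleIntegrable hR.le
  intro z hz
  exact (hf z (by simpa using hz)).continuousAt.continuousWithinAt

noncomputable def FF (q u z : ℂ) : ℂ :=
  (qp q (u * z) * qp q (-u * z)) * (qp q (u / z) * qp q (-u / z))

noncomputable def GG (q u a z : ℂ) : ℂ := FF q u z / (qp q (a * z) * qp q (a / z))

noncomputable def PP (q u a z : ℂ) : ℂ := z * FF q u z / (qp q (a * z) * qp q (q * a / z))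

theorem FF_inv (q u z : ℂ) : FF q u (1 / z) = FF q u z := by
  unfold FF
  simp only [div_div_eq_mul_div, div_one, mul_one_div]
  ring

theorem GG_inv (q u a z : ℂ) : GG q u a (1 / z) = GG q u a z := by
  unfold GG
  rw [FF_inv]
  simp only [div_div_eq_mul_div, div_one, mul_one_div]
  ring

theorem FF_refl (q u z : ℂ) (hq0 : q ≠ 0) (hq : ‖q‖ < 1) (hu : u ^ 2 = q) (hz : z ≠ 0) :
    FF q u (q / z) = - (z ^ 2 / q) * FF q u z := by
  have hu0 : u ≠ 0 := by rintro rfl; apply hq0; rw [← hu]; ring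
  unfold FF
  rw [← hu]
  have e1 : u / (u ^ 2 / z) = z / u := by field_simp
  have e2 : -u / (u ^ 2 / z) = -z / u := by field_simp
  have r1 := qp_rec (u ^ 2) (z / u) (by rw [hu]; exact hq)
  have r2 := qp_rec (u ^ 2) (-z / u) (by rw [hu]; exact hq)
  have r3 := qp_rec (u ^ 2) (u / z) (by rw [hu]; exact hq)
  have r4 := qp_rec (u ^ 2) (-u / z) (by rw [hu]; exact hq)
  rw [e1, e2, r1, r2, r3, r4]
  have e3 : u ^ 2 * (z / u) = u * z := by field_simp
  have e4 : u ^ 2 * (-z / u) = -u * z := by field_simp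
  have e5 : u * (u ^ 2 / z) = u ^ 2 * (u / z) := by field_simp
  have e6 : -u * (u ^ 2 / z) = u ^ 2 * (-u / z) := by field_simp
  rw [e3, e4, e5, e6]
  field_simp
  ring

theorem PP_refl (q u a z : ℂ) (hq0 : q ≠ 0) (hq : ‖q‖ < 1) (hu : u ^ 2 = q) (hz : z ≠ 0) :
    PP q u a (q / z) = - PP q u a z := by
  unfold PP
  rw [FF_refl q u z hq0 hq hu hz]
  have e1 : a * (q / z) = q * a / z := by ring
  have e2 : q * a / (q / z) = a * z := by field_simp
  rw [e1, e2]
  have : q / z * (-(z ^ 2 / q) * FF q u z) = - (z * FF q u z) := by field_simp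
  rw [this, mul_comm (qp q (q * a / z))]
  ring

theorem FF_diff (q u z : ℂ) (hq : ‖q‖ < 1) (hz : z ≠ 0) : DifferentiableAt ℂ (FF q u) z := by
  have h := qp_diff q hq
  unfold FF
  have h1 : DifferentiableAt ℂ (fun z => qp q (u * z)) z := (h _).comp z (by fun_prop)
  have h2 : DifferentiableAt ℂ (fun z => qp q (-u * z)) z := (h _).comp z (by fun_prop)
  have h3 : DifferentiableAt ℂ (fun z => qp q (u / z)) z :=
    (h (u / z)).comp z (f := fun z => u / z) (by fun_prop (disch := assumption))
  have h4 : DifferentiableAt ℂ (fun z => qp q (-u / z)) z :=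
    (h (-u / z)).comp z (f := fun z => -u / z) (by fun_prop (disch := assumption))
  exact (h1.mul h2).mul (h3.mul h4)

/-- common denominators -/
theorem den_diff (q a b z : ℂ) (hq : ‖q‖ < 1) (hz : z ≠ 0) :
    DifferentiableAt ℂ (fun z => qp q (a * z) * qp q (b / z)) z := by
  have h := qp_diff q hq
  have h1 : DifferentiableAt ℂ (fun z => qp q (a * z)) z := (h _).comp z (by fun_prop)
  have h3 : DifferentiableAt ℂ (fun z => qp q (b / z)) z :=
    (h (b / z)).comp z (f := fun z => b / z) (by fun_prop (disch := assumption))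
  exact h1.mul h3

theorem den_ne (q a b z : ℂ) (hq : ‖q‖ < 1) (hz : z ≠ 0) (h1 : ‖a‖ * ‖z‖ < 1) (h2 : ‖b‖ < ‖z‖) :
    qp q (a * z) * qp q (b / z) ≠ 0 := by
  apply mul_ne_zero
  · exact qp_ne q _ hq (by rwa [norm_mul])
  · apply qp_ne q _ hq
    rw [norm_div, div_lt_one (norm_pos_iff.2 hz)]
    exact h2

theorem GG_diff (q u a z : ℂ) (hq : ‖q‖ < 1) (hz : z ≠ 0) (h1 : ‖a‖ * ‖z‖ < 1) (h2 : ‖a‖ < ‖z‖) :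
    DifferentiableAt ℂ (GG q u a) z :=
  (FF_diff q u z hq hz).div (den_diff q a a z hq hz) (den_ne q a a z hq hz h1 h2)

theorem PP_diff (q u a z : ℂ) (hq : ‖q‖ < 1) (hz : z ≠ 0) (h1 : ‖a‖ * ‖z‖ < 1)
    (h2 : ‖q * a‖ < ‖z‖) : DifferentiableAt ℂ (PP q u a) z :=
  (differentiableAt_id.mul (FF_diff q u z hq hz)).div
    (den_diff q a (q * a) z hq hz) (den_ne q a (q * a) z hq hz h1 h2)

open Real in
theorem step_rec (q u a : ℂ) (hq0 : 0 < ‖q‖) (hq : ‖q‖ < 1) (hu : u ^ 2 = q) (ha : ‖a‖ < 1) :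
    circleAverage (GG q u (q * a)) 0 1 = (1 - a ^ 2) * circleAverage (GG q u a) 0 1 := by
  have hq0' : q ≠ 0 := norm_pos_iff.1 hq0
  have hs : 0 < √‖q‖ := Real.sqrt_pos.2 hq0
  have hs1 : √‖q‖ ≤ 1 := Real.sqrt_le_one.2 hq.le
  have hsq : ‖q‖ ≤ √‖q‖ := by
    nlinarith [Real.sq_sqrt hq0.le]
  have hP : circleAverage (PP q u a) 0 1 = 0 := by
    rw [avg_annulus (PP q u a) (√‖q‖) 1 hs hs1]
    · exact avg_antisymm _ q hq0 fun z hz => PP_refl q u a z hq0' hq hu hz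
    · intro z h1 h2
      refine PP_diff q u a z hq (norm_pos_iff.1 (hs.trans_le h1)) ?_ ?_
      · nlinarith [norm_nonneg a, norm_nonneg z]
      · rw [norm_mul]
        nlinarith
  have hP2 : circleAverage (fun z => PP q u a (1 / z)) 0 1 = 0 := by
    rw [avg_refl (PP q u a) 1 1 one_ne_zero]
    simpa using hP
  have hnz : ∀ z : ℂ, ‖z‖ = 1 → z ≠ 0 := by
    rintro z hz rfl
    simp at hz
  have hqa : ‖q * a‖ < 1 := by rw [norm_mul]; nlinarith [norm_nonneg a]
  have dG : ∀ z : ℂ, ‖z‖ = 1 → DifferentiableAt ℂ (GG q u a) z := fun z hz =>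
    GG_diff q u a z hq (hnz z hz) (by rw [hz]; simpa) (by rw [hz]; simpa)
  have dP : ∀ z : ℂ, ‖z‖ = 1 → DifferentiableAt ℂ (PP q u a) z := fun z hz =>
    PP_diff q u a z hq (hnz z hz) (by rw [hz]; simpa) (by rw [hz]; exact hqa)
  have dP2 : ∀ z : ℂ, ‖z‖ = 1 → DifferentiableAt ℂ (fun z => PP q u a (1 / z)) z := by
    intro z hz
    have := hnz z hz
    exact (dP (1 / z) (by simp [hz])).comp z (f := fun z => 1 / z)
      (by fun_prop (disch := assumption))
  have hGP : ∀ z : ℂ, ‖z‖ = 1 → PP q u a z = (z - a) * GG q u a z := by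
    intro z hz
    have hz0 := hnz z hz
    have n1 := den_ne q a (q * a) z hq hz0 (by rw [hz]; simpa) (by rw [hz]; exact hqa)
    have n2 := den_ne q a a z hq hz0 (by rw [hz]; simpa) (by rw [hz]; simpa)
    unfold PP GG
    rw [qp_rec q (a / z) hq, ← mul_div_assoc] at n2 ⊢
    have n3 : 1 - a / z ≠ 0 := fun h => n2 (by rw [h]; ring)
    have n4 := left_ne_zero_of_mul n1
    have n5 := right_ne_zero_of_mul n1
    have n6 : z - a ≠ 0 := by
      intro h; apply n3; field_simp; simpa using h
    rw [show 1 - a / z = (z - a) / z by field_simp]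
    field_simp
  have hGq : ∀ z : ℂ, ‖z‖ = 1 → GG q u (q * a) z = (1 - a * z) * (1 - a / z) * GG q u a z := by
    intro z hz
    have hz0 := hnz z hz
    have n2 := den_ne q a a z hq hz0 (by rw [hz]; simpa) (by rw [hz]; simpa)
    unfold GG
    rw [qp_rec q (a / z) hq, qp_rec q (a * z) hq, ← mul_div_assoc, ← mul_assoc q] at n2 ⊢
    have n4 := left_ne_zero_of_mul n2
    have n5 := right_ne_zero_of_mul n2
    have n6 := left_ne_zero_of_mul n4
    have n7 := left_ne_zero_of_mul n5
    have n8 := right_ne_zero_of_mul n4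
    have n9 := right_ne_zero_of_mul n5
    rw [eq_comm, mul_div_assoc', div_eq_div_iff n2 (mul_ne_zero n8 n9)]
    ring
  have e : circleAverage (GG q u (q * a)) 0 1 = circleAverage (fun z => (1 - a ^ 2) • GG q u a z
      + (-a) • (PP q u a z + PP q u a (1 / z))) 0 1 := by
    apply circleAverage_congr_sphere
    intro z hz
    have hz : ‖z‖ = 1 := by simpa using hz
    have hz0 := hnz z hz
    simp only [smul_eq_mul]
    rw [hGq z hz, hGP z hz, hGP (1 / z) (by simp [hz]), GG_inv]
    field_simp
    ring
  rw [e, circleAverage_fun_add, circleAverage_fun_smul, circleAverage_fun_smul,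
    circleAverage_fun_add, hP, hP2]
  · simp
  · exact ci_of_diff _ 1 one_pos dP
  · exact ci_of_diff _ 1 one_pos dP2
  · exact ci_of_diff _ 1 one_pos fun z hz => (dG z hz).fun_const_smul _
  · exact ci_of_diff _ 1 one_pos fun z hz => ((dP z hz).fun_add (dP2 z hz)).fun_const_smul _

open Real in
theorem step_q (q u : ℂ) (hq0 : 0 < ‖q‖) (hq : ‖q‖ < 1) (hu : u ^ 2 = q) :
    circleAverage (GG q u q) 0 1 = GG q u q 1 := by
  have hq0' : q ≠ 0 := norm_pos_iff.1 hq0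
  have hs : 0 < √‖q‖ := Real.sqrt_pos.2 hq0
  have hs1 : √‖q‖ < 1 := by rw [Real.sqrt_lt' one_pos]; simpa
  have hsq2 := Real.sq_sqrt hq0.le
  have hsq : ‖q‖ < √‖q‖ := by nlinarith
  have hqr : ‖q‖ * (1 / √‖q‖) < 1 := by
    rw [mul_one_div, div_lt_one hs]; exact hsq
  have hrinv : 1 < 1 / √‖q‖ := by rw [lt_div_iff₀ hs]; simpa
  have hPavg : circleAverage (PP q u 1) 0 (√‖q‖) = 0 :=
    avg_antisymm _ q hq0 fun z hz => PP_refl q u 1 z hq0' hq hu hz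
  set r := √‖q‖ with hr
  have hnz : ∀ z : ℂ, ‖z‖ = r → z ≠ 0 := by
    rintro z hz rfl
    simp at hz
    linarith
  have hn1 : ∀ z : ℂ, ‖z‖ = r → z ≠ 1 := by
    rintro z hz rfl
    simp at hz
    linarith
  set K := GG q u q with hK
  have dK : ∀ z : ℂ, ‖q‖ < ‖z‖ → ‖q‖ * ‖z‖ < 1 → DifferentiableAt ℂ K z := fun z h1 h2 =>
    GG_diff q u q z hq (norm_pos_iff.1 (hq0.trans h1)) h2 h1
  have dKr : ∀ z : ℂ, ‖z‖ = r → DifferentiableAt ℂ K z := fun z hz =>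
    dK z (by rw [hz]; exact hsq) (by rw [hz]; nlinarith)
  have dKa : ∀ z : ℂ, r ≤ ‖z‖ → ‖z‖ ≤ 1 / r → DifferentiableAt ℂ K z := fun z h1 h2 =>
    dK z (by linarith) (lt_of_le_of_lt (by gcongr) hqr)
  have hKavg : circleAverage K 0 1 = circleAverage K 0 r :=
    avg_annulus K r 1 hs hs1.le fun z h1 h2 => dKa z h1 (by linarith)
  have dD1 : ∀ z : ℂ, r ≤ ‖z‖ → ‖z‖ ≤ 1 / r → DifferentiableAt ℂ (dslope K 1) z := by
    intro z h1 h2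
    by_cases hz : z = 1
    · subst hz
      have hU : {w : ℂ | ‖q‖ < ‖w‖ ∧ ‖q‖ * ‖w‖ < 1} ∈ nhds (1:ℂ) := by
        refine IsOpen.mem_nhds ?_ ?_
        · exact (isOpen_lt continuous_const continuous_norm).inter
            (isOpen_lt (continuous_const.mul continuous_norm) continuous_const)
        · simpa using hq
      have := (Complex.differentiableOn_dslope (f := K) hU).2 fun w hw =>
        (dK w hw.1 hw.2).differentiableWithinAt
      exact this.differentiableAt hU
    · exact (differentiableAt_dslope_of_ne hz).2 (dKa z h1 h2)
  set D : ℂ → ℂ := fun z => z * dslope K 1 z with hD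
  have dD : ∀ z : ℂ, r ≤ ‖z‖ → ‖z‖ ≤ 1 / r → DifferentiableAt ℂ D z := fun z h1 h2 =>
    differentiableAt_id.mul (dD1 z h1 h2)
  have hDavg : circleAverage D 0 (1 / r) = circleAverage D 0 r :=
    avg_annulus D r (1 / r) hs (by linarith) dD
  have hDval : ∀ z : ℂ, z ≠ 1 → D z = z * ((K z - K 1) / (z - 1)) := by
    intro z hz
    simp only [hD, dslope_of_ne _ hz, slope_def_field]
  have hrefl := avg_refl D 1 r hs.ne'
  rw [norm_one, hDavg] at hrefl
  have cK : CircleIntegrable K 0 r := ci_of_diff K r hs dKr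
  have cD : CircleIntegrable D 0 r := ci_of_diff D r hs fun z hz => dD z hz.ge (by linarith)
  have cC : CircleIntegrable (fun _ : ℂ => K 1) 0 r := ci_of_diff _ r hs fun z hz => by fun_prop
  have h1 : circleAverage (fun z => D (1 / z)) 0 r = circleAverage (fun z => (K z - K 1) - D z) 0 r := by
    apply circleAverage_congr_sphere
    intro z hz
    have hz : ‖z‖ = r := by simpa [abs_of_pos hs] using hz
    have z0 := hnz z hz
    have z1 := hn1 z hz
    have z2 : z - 1 ≠ 0 := sub_ne_zero.2 z1
    have z2' : 1 - z ≠ 0 := sub_ne_zero.2 z1.symm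
    have z3 : 1 / z ≠ 1 := by
      intro h; apply z1; field_simp at h; exact h.symm
    simp only
    rw [hDval _ z3, hDval _ z1, hK, GG_inv, ← hK]
    have : 1 / z - 1 = (1 - z) / z := by field_simp
    rw [this]
    field_simp
    ring
  rw [h1, circleAverage_fun_sub (f₁ := fun z => K z - K 1) (cK.sub cC) cD, circleAverage_fun_sub cK cC, circleAverage_const] at hrefl
  have cP : CircleIntegrable (PP q u 1) 0 r := ci_of_diff _ r hs fun z hz =>
    PP_diff q u 1 z hq (hnz z hz) (by rw [hz]; simpa using hs1) (by rw [hz]; simpa using hsq)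
  have dB : ∀ z : ℂ, ‖z‖ ≤ r → DifferentiableAt ℂ (fun z : ℂ => z / (1 - z)) z := by
    intro z hz
    have : 1 - z ≠ 0 := by
      intro h
      have : z = 1 := by linear_combination -h
      rw [this] at hz
      simp at hz
      linarith
    fun_prop (disch := assumption)
  have cB : CircleIntegrable (fun z : ℂ => z / (1 - z)) 0 r := ci_of_diff _ r hs fun z hz =>
    dB z hz.le
  have hB : circleAverage (fun z : ℂ => z / (1 - z)) 0 r = 0 := by
    rw [circleAverage_of_differentiable_on_off_countable (s := ∅) Set.countable_empty]
    · simp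
    · intro z hz
      have hz : ‖z‖ ≤ r := by simpa [abs_of_pos hs] using hz
      exact (dB z hz).continuousAt.continuousWithinAt
    · intro z hz
      have hz : ‖z‖ < r := by simpa [abs_of_pos hs] using hz
      exact dB z hz.le
  have h2 : circleAverage D 0 r = circleAverage (fun z => K 1 • (z / (1 - z)) - PP q u 1 z) 0 r := by
    apply circleAverage_congr_sphere
    intro z hz
    have hz : ‖z‖ = r := by simpa [abs_of_pos hs] using hz
    have z0 := hnz z hz
    have z1 := hn1 z hz
    have z2 : z - 1 ≠ 0 := sub_ne_zero.2 z1
    have z2' : 1 - z ≠ 0 := sub_ne_zero.2 z1.symm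
    have hPK : PP q u 1 z = z / (1 - z) * K z := by
      simp only [hK, PP, GG, one_mul, mul_one]
      rw [qp_rec q z hq]
      simp only [div_eq_mul_inv, mul_inv]
      ring
    simp only [smul_eq_mul]
    rw [hDval _ z1, hPK]
    field_simp
    ring
  rw [circleAverage_fun_sub _ cP, circleAverage_fun_smul, hB, hPavg] at h2
  · rw [h2] at hrefl
    rw [hKavg]
    simp at hrefl
    linear_combination hrefl
  · exact ci_of_diff _ r hs fun z hz => (dB z hz.le).fun_const_smul _

theorem circ_norm (θ : ℝ) : ‖circleMap 0 1 θ‖ = 1 := by simp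

theorem circ_ne (θ : ℝ) : circleMap 0 1 θ ≠ 0 := circleMap_ne_center one_ne_zero

theorem GG_cont (q u : ℂ) (hq : ‖q‖ < 1) :
    Continuous (Function.uncurry fun (x : Metric.ball (0:ℂ) 1) (θ : ℝ) =>
      GG q u x (circleMap 0 1 θ)) := by
  have h := (qp_diff q hq).continuous
  have hc : Continuous fun p : Metric.ball (0:ℂ) 1 × ℝ => circleMap 0 1 p.2 :=
    (continuous_circleMap 0 1).comp continuous_snd
  have hx : Continuous fun p : Metric.ball (0:ℂ) 1 × ℝ => (p.1 : ℂ) :=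
    continuous_subtype_val.comp continuous_fst
  have hd : ∀ c : Metric.ball (0:ℂ) 1 × ℝ → ℂ, Continuous c →
      Continuous fun p : Metric.ball (0:ℂ) 1 × ℝ => qp q (c p / circleMap 0 1 p.2) :=
    fun c hcc => h.comp (hcc.div hc fun p => circ_ne p.2)
  have hm : ∀ c : Metric.ball (0:ℂ) 1 × ℝ → ℂ, Continuous c →
      Continuous fun p : Metric.ball (0:ℂ) 1 × ℝ => qp q (c p * circleMap 0 1 p.2) :=
    fun c hcc => h.comp (hcc.mul hc)
  refine Continuous.div
    (((hm (fun _ => u) continuous_const).mul (hm (fun _ => -u) continuous_const)).mul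
      ((hd (fun _ => u) continuous_const).mul (hd (fun _ => -u) continuous_const)))
    ((hm _ hx).mul (hd _ hx)) ?_
  intro p
  have hp : ‖(p.1 : ℂ)‖ < 1 := mem_ball_zero_iff.1 p.1.2
  exact den_ne q _ _ _ hq (circ_ne p.2) (by rw [circ_norm]; simpa using hp)
    (by rw [circ_norm]; exact hp)

open Real in
theorem I_cont (q u : ℂ) (hq : ‖q‖ < 1) :
    Continuous fun x : Metric.ball (0:ℂ) 1 => circleAverage (GG q u x) 0 1 := by
  unfold circleAverage
  exact (intervalIntegral.continuous_parametric_intervalIntegral_of_continuous'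
    (GG_cont q u hq) 0 (2 * π)).const_smul _

open Real in
theorem J_const (q u a : ℂ) (hq0 : 0 < ‖q‖) (hq : ‖q‖ < 1) (hu : u ^ 2 = q) (ha : ‖a‖ < 1) :
    circleAverage (GG q u a) 0 1 * qp q a * qp q (-a) = circleAverage (GG q u 0) 0 1 := by
  have hmem : ∀ n : ℕ, ‖q ^ n * a‖ < 1 := by
    intro n
    rw [norm_mul, norm_pow]
    have : ‖q‖ ^ n ≤ 1 := pow_le_one₀ (norm_nonneg _) hq.le
    nlinarith [norm_nonneg a]
  have hstep : ∀ n : ℕ, circleAverage (GG q u (q ^ n * a)) 0 1 * qp q (q ^ n * a)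
      * qp q (-(q ^ n * a)) = circleAverage (GG q u a) 0 1 * qp q a * qp q (-a) := by
    intro n
    induction n with
    | zero => simp
    | succ n ih =>
      rw [← ih, show q ^ (n + 1) * a = q * (q ^ n * a) by ring,
        step_rec q u _ hq0 hq hu (hmem n), qp_rec q (q ^ n * a) hq, qp_rec q (-(q ^ n * a)) hq,
        mul_neg]
      ring
  have hlim : Filter.Tendsto (fun n : ℕ => q ^ n * a) Filter.atTop (nhds 0) := by
    simpa using (tendsto_pow_atTop_nhds_zero_of_norm_lt_one hq).mul_const a
  have hlim2 : Filter.Tendsto (fun n : ℕ => (⟨q ^ n * a, by simpa using hmem n⟩ :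
      Metric.ball (0:ℂ) 1)) Filter.atTop (nhds ⟨0, by simp⟩) := tendsto_subtype_rng.2 hlim
  have hqc := (qp_diff q hq).continuous
  have t1 := ((I_cont q u hq).tendsto _).comp hlim2
  have t2 := (hqc.tendsto _).comp hlim
  have t3 := (hqc.tendsto _).comp hlim.neg
  have t := (t1.mul t2).mul t3
  have t' : Filter.Tendsto (fun _ : ℕ => circleAverage (GG q u a) 0 1 * qp q a * qp q (-a))
      Filter.atTop _ := t.congr fun n => hstep n
  have := tendsto_nhds_unique tendsto_const_nhds t'
  rw [this, neg_zero, qp_zero]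
  simp

open Real in
theorem I_val (q u a : ℂ) (hq0 : 0 < ‖q‖) (hq : ‖q‖ < 1) (hu : u ^ 2 = q) (ha : ‖a‖ < 1) :
    circleAverage (GG q u a) 0 1 = (qp q u * qp q (-u)) / (qp q q * qp q a * qp q (-a)) := by
  have h1 := J_const q u a hq0 hq hu ha
  rw [← J_const q u q hq0 hq hu hq, step_q q u hq0 hq hu] at h1
  have n1 := qp_ne q a hq ha
  have n2 := qp_ne q (-a) hq (by simpa using ha)
  have n3 := qp_ne q q hq hq
  have he := qp_euler q u hq hu
  have e : GG q u q 1 * qp q q * qp q (-q) = qp q u * qp q (-u) / qp q q := by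
    simp only [GG, FF, mul_one, div_one]
    field_simp
    linear_combination (qp q u * qp q (-u)) * he
  rw [e] at h1
  rw [eq_div_iff (mul_ne_zero (mul_ne_zero n3 n1) n2)]
  rw [eq_div_iff n3] at h1
  linear_combination h1

theorem integral_step_two (q u a : ℂ) (hq0 : 0 < ‖q‖) (hq : ‖q‖ < 1) (hu : u ^ 2 = q)
    (ha : ‖a‖ < 1) :
    ∫ θ in (0:ℝ)..Real.pi, (hh q θ u * hh q θ (-u)) / hh q θ a
      = (Real.pi : ℂ) * (qp q u * qp q (-u)) / (qp q q * qp q a * qp q (-a)) := by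
  have hg : ∀ θ : ℝ, (hh q θ u * hh q θ (-u)) / hh q θ a = GG q u a (circleMap 0 1 θ) := by
    intro θ
    have hi : ∀ l : ℂ, l / circleMap 0 1 θ = l * Complex.exp (-((θ : ℂ) * Complex.I)) := by
      intro l
      simp [circleMap, Complex.exp_neg, div_eq_mul_inv]
    unfold GG FF hh
    rw [hi, hi, hi]
    simp only [circleMap, zero_add, Complex.ofReal_one, one_mul]
    ring
  simp only [hg]
  set g : ℝ → ℂ := fun θ => GG q u a (circleMap 0 1 θ) with hgd
  have gc : Continuous g := by
    have hp : Continuous fun θ : ℝ => ((⟨a, mem_ball_zero_iff.2 ha⟩ : Metric.ball (0:ℂ) 1), θ) :=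
      Continuous.prodMk continuous_const continuous_id
    have := (GG_cont q u hq).comp hp
    simpa only [Function.comp_def, Function.uncurry] using this
  have geven : ∀ θ, g (-θ) = g θ := by
    intro θ
    have : circleMap 0 1 (-θ) = 1 / circleMap 0 1 θ := by
      simp [circleMap, Complex.exp_neg]
    simp only [hgd]
    rw [this, GG_inv]
  have gper : Function.Periodic g (2 * Real.pi) := by
    intro θ
    simp only [hgd]
    rw [periodic_circleMap 0 1 θ]
  have h1 := gper.intervalIntegral_add_eq 0 (-Real.pi)
  rw [zero_add, show -Real.pi + 2 * Real.pi = Real.pi by ring] at h1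
  have h2 := intervalIntegral.integral_add_adjacent_intervals
    (gc.intervalIntegrable (μ := volume) (-Real.pi) 0) (gc.intervalIntegrable 0 Real.pi)
  have h3 := intervalIntegral.integral_comp_neg g (a := 0) (b := Real.pi)
  simp only [geven, neg_zero] at h3
  have h4 := I_val q u a hq0 hq hu ha
  rw [Real.circleAverage_def] at h4
  change (2 * Real.pi)⁻¹ • (∫ θ in (0:ℝ)..2 * Real.pi, g θ) = _ at h4
  rw [h1, ← h2, ← h3, Complex.real_smul] at h4
  have hpi : (Real.pi : ℂ) ≠ 0 := by exact_mod_cast Real.pi_ne_zero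
  rw [mul_div_assoc, ← h4]
  push_cast
  field_simp
  ring
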